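/- arXiv:2310.07156 — 4 statements merged into one kernel-verified Lean document; each statement's English description precedes it below -/
import Mathlib

section
/- Let t be a cyclic tour on n cities, let 0 < b < e < n, and let t' = 2OPT(t,b,e). If the distance function is symmetric (d(c,c') = d(c',c) for all cities c, c'), then the total distance of the new tour satisfies D(t') = D(t) + d(t_{b-1}, t_e) + d(t_b, t_{e+1}) − d(t_{b-1}, t_b) − d(t_e, t_{e+1}). -/
/-- A cyclic tour on `n` cities `1,…,n`: a sequence `t 0, …, t n` with
`t 0 = t n = 1` whose restriction to positions `1,…,n−1` is a bijection
onto the cities `2,…,n`. -/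
def IsCyclicTour (n : ℕ) (t : ℕ → ℕ) : Prop :=
  t 0 = 1 ∧ t n = 1 ∧ Set.BijOn t (Set.Icc 1 (n - 1)) (Set.Icc 2 n)

/-- The 2OPT operator: reverse the tour segment between positions `b` and `e`. -/
def twoOpt (t : ℕ → ℕ) (b e : ℕ) : ℕ → ℕ :=
  fun k => if b ≤ k ∧ k ≤ e then t (b + e - k) else t k

/-- Total distance `D(t)` travelled along the tour. -/
def tourDist (n : ℕ) (d : ℕ → ℕ → ℝ) (t : ℕ → ℕ) : ℝ :=
  ∑ k ∈ Finset.range n, d (t k) (t (k + 1))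

/-- If `d` is symmetric then
`D(t') = D(t) + d(t_{b-1}, t_e) + d(t_b, t_{e+1}) − d(t_{b-1}, t_b) − d(t_e, t_{e+1})`
for the tour `t' = 2OPT(t,b,e)`. -/
theorem twoOpt_tourDist
    (n : ℕ) (hn : 2 ≤ n) (d : ℕ → ℕ → ℝ)
    (hsym : ∀ c c', d c c' = d c' c)
    (t : ℕ → ℕ) (ht : IsCyclicTour n t)
    (b e : ℕ) (hb : 0 < b) (hbe : b < e) (he : e < n) :
    tourDist n d (twoOpt t b e)
      = tourDist n d t + d (t (b - 1)) (t e) + d (t b) (t (e + 1))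
        - d (t (b - 1)) (t b) - d (t e) (t (e + 1)) := by
  obtain ⟨a, rfl⟩ : ∃ a, b = a + 1 := ⟨b - 1, by omega⟩
  obtain ⟨m, rfl⟩ : ∃ m, e = a + 1 + m := ⟨e - (a + 1), by omega⟩
  obtain ⟨r, rfl⟩ : ∃ r, n = a + 1 + m + 1 + r := ⟨n - (a + 1 + m + 1), by omega⟩
  have split : ∀ f : ℕ → ℝ, ∑ k ∈ Finset.range (a + 1 + m + 1 + r), f k
      = ∑ k ∈ Finset.range a, f k + f a + ∑ k ∈ Finset.range m, f (a + 1 + k)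
        + f (a + 1 + m) + ∑ k ∈ Finset.range r, f (a + 1 + m + 1 + k) := by
    intro f
    rw [Finset.sum_range_add, Finset.sum_range_succ, Finset.sum_range_add,
      Finset.sum_range_succ]
  have inside : ∀ k, a + 1 ≤ k → k ≤ a + 1 + m →
      twoOpt t (a + 1) (a + 1 + m) k = t (a + 1 + (a + 1 + m) - k) := by
    intro k h1 h2
    simp only [twoOpt]
    rw [if_pos ⟨h1, h2⟩]
  have outside : ∀ k, k < a + 1 ∨ a + 1 + m < k →
      twoOpt t (a + 1) (a + 1 + m) k = t k := by
    intro k h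
    simp only [twoOpt]
    rw [if_neg (by omega)]
  unfold tourDist
  rw [split, split]
  have h1 : ∑ k ∈ Finset.range a, d (twoOpt t (a + 1) (a + 1 + m) k)
        (twoOpt t (a + 1) (a + 1 + m) (k + 1))
      = ∑ k ∈ Finset.range a, d (t k) (t (k + 1)) := by
    refine Finset.sum_congr rfl fun k hk => ?_
    have := Finset.mem_range.1 hk
    rw [outside k (by omega), outside (k + 1) (by omega)]
  have h2 : ∑ k ∈ Finset.range r, d (twoOpt t (a + 1) (a + 1 + m) (a + 1 + m + 1 + k))
        (twoOpt t (a + 1) (a + 1 + m) (a + 1 + m + 1 + k + 1))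
      = ∑ k ∈ Finset.range r, d (t (a + 1 + m + 1 + k)) (t (a + 1 + m + 1 + k + 1)) := by
    refine Finset.sum_congr rfl fun k _ => ?_
    rw [outside _ (by omega), outside _ (by omega)]
  have h3 : ∑ k ∈ Finset.range m, d (twoOpt t (a + 1) (a + 1 + m) (a + 1 + k))
        (twoOpt t (a + 1) (a + 1 + m) (a + 1 + k + 1))
      = ∑ k ∈ Finset.range m, d (t (a + 1 + k)) (t (a + 1 + k + 1)) := by
    rw [← Finset.sum_range_reflect (fun k => d (t (a + 1 + k)) (t (a + 1 + k + 1)))]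
    refine Finset.sum_congr rfl fun k hk => ?_
    have := Finset.mem_range.1 hk
    rw [inside _ (by omega) (by omega), inside _ (by omega) (by omega), hsym]
    congr 2 <;> omega
  rw [h1, h2, h3, outside a (by omega), inside (a + 1) (by omega) (by omega),
    inside (a + 1 + m) (by omega) (by omega), outside (a + 1 + m + 1) (by omega)]
  have e1 : a + 1 + (a + 1 + m) - (a + 1) = a + 1 + m := by omega
  have e2 : a + 1 + (a + 1 + m) - (a + 1 + m) = a + 1 := by omega
  rw [e1, e2, Nat.add_sub_cancel]
  ring
end

section
/- Let t be a cyclic tour on n cities, let 0 < b < e < n, and let t' = 2OPT(t,b,e). If the distance function is symmetric, then the sum of the distances along the interior edges of the reversed segment is unchanged: Σ_{k=b}^{e−1} d(t'_k, t'_{k+1}) = Σ_{k=b}^{e−1} d(t_k, t_{k+1}). -/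
/-- If `d` is symmetric, the sum of the distances along the interior edges of the
reversed segment (edges from position `k` to `k+1` for `b ≤ k ≤ e−1`) is unchanged
by 2OPT. -/
theorem twoOpt_interior_edges_sum
    (n : ℕ) (hn : 2 ≤ n) (d : ℕ → ℕ → ℝ)
    (hsym : ∀ c c', d c c' = d c' c)
    (t : ℕ → ℕ) (ht : IsCyclicTour n t)
    (b e : ℕ) (hb : 0 < b) (hbe : b < e) (he : e < n) :
    ∑ k ∈ Finset.Ico b e, d (twoOpt t b e k) (twoOpt t b e (k + 1))
      = ∑ k ∈ Finset.Ico b e, d (t k) (t (k + 1)) := by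
  refine Finset.sum_bij' (fun k _ => b + e - 1 - k) (fun k _ => b + e - 1 - k) ?_ ?_ ?_ ?_ ?_
  · intro k hk
    rw [Finset.mem_Ico] at *
    omega
  · intro k hk
    rw [Finset.mem_Ico] at *
    omega
  · intro k hk
    rw [Finset.mem_Ico] at hk
    omega
  · intro k hk
    rw [Finset.mem_Ico] at hk
    omega
  · intro k hk
    rw [Finset.mem_Ico] at hk
    have h1 : twoOpt t b e k = t (b + e - 1 - k + 1) := by
      unfold twoOpt
      rw [if_pos (by omega)]
      congr 1
      omega
    have h2 : twoOpt t b e (k + 1) = t (b + e - 1 - k) := by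
      unfold twoOpt
      rw [if_pos (by omega)]
      congr 1
      omega
    rw [h1, h2, hsym]
end

section
/- (TSP Reduction) Consider a TTP instance with s_max = s_min = s and knapsack capacity W ≥ Σ_{i=1}^{m} w_i. Then for every cyclic tour t, the maximum of the objective N(t,p) over all collection plans p satisfying the knapsack constraint K(p) equals Σ_{i=1}^{m} π_i − (R/s)·D(t), and this maximum is attained by the all-ones plan. Consequently, a cyclic tour t* minimises D(t) over all cyclic tours if and only if t* maximises max_{p : K(p)} N(t,p) over all cyclic tours; i.e. solving this TTP is equivalent to solving the underlying TSP. -/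
/-- The speed function `s(w) = s_max − (w/W)(s_max − s_min)`. -/
noncomputable def speed (W smax smin w : ℝ) : ℝ :=
  smax - (w / W) * (smax - smin)

/-- `w_p(c)`: total weight of the items collected from city `c` under plan `p`. -/
def cityWeight (m : ℕ) (w : Fin m → ℝ) (l : Fin m → ℕ) (p : Fin m → ℝ) (c : ℕ) : ℝ :=
  ∑ i, if l i = c then w i * p i else 0

/-- `w_{t,p}(k)`: knapsack weight after collecting items from cities up to
position `k` of the tour `t` under plan `p`. -/
def knapWeight (m : ℕ) (w : Fin m → ℝ) (l : Fin m → ℕ)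
    (t : ℕ → ℕ) (p : Fin m → ℝ) (k : ℕ) : ℝ :=
  ∑ k' ∈ Finset.range (k + 1), cityWeight m w l p (t k')

/-- `τ_{t,p}(k)`: travelling time up to position `k` in the tour. -/
noncomputable def travelTimeUpTo (m : ℕ) (d : ℕ → ℕ → ℝ) (w : Fin m → ℝ)
    (l : Fin m → ℕ) (W smax smin : ℝ) (t : ℕ → ℕ) (p : Fin m → ℝ) (k : ℕ) : ℝ :=
  ∑ k' ∈ Finset.range k, d (t k') (t (k' + 1)) / speed W smax smin (knapWeight m w l t p k')

/-- `T(t,p)`: total travelling time of the tour `t` under plan `p`. -/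
noncomputable def travelTime (n m : ℕ) (d : ℕ → ℕ → ℝ) (w : Fin m → ℝ)
    (l : Fin m → ℕ) (W smax smin : ℝ) (t : ℕ → ℕ) (p : Fin m → ℝ) : ℝ :=
  travelTimeUpTo m d w l W smax smin t p n

/-- TSP Reduction: if `s_max = s_min = s` and the knapsack capacity is at least the
total weight of all items, then for every cyclic tour `t` the maximum of the
objective `N(t,p) = P(p) − R·T(t,p)` over all plans `p` satisfying the knapsack
constraint equals `Σ π_i − (R/s)·D(t)`, attained by the all-ones plan; consequently
a cyclic tour minimises `D` iff it maximises `max_p N(t,p)`. -/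
theorem tsp_reduction
    (n m : ℕ) (hn : 2 ≤ n)
    (d : ℕ → ℕ → ℝ) (hd : ∀ c c', c ≠ c' → 0 < d c c')
    (w profit : Fin m → ℝ) (hw : ∀ i, 0 < w i) (hprofit : ∀ i, 0 < profit i)
    (l : Fin m → ℕ) (hl : ∀ i, 1 < l i)
    (W R smax smin : ℝ) (hW : 0 < W) (hR : 0 < R)
    (hs : smin ≤ smax) (hsmin : 0 < smin)
    (hconst : smax = smin)
    (hcap : (∑ i, w i) ≤ W) :
    (∀ t, IsCyclicTour n t →
      IsGreatest
        {x : ℝ | ∃ p : Fin m → ℝ, (∀ i, p i = 0 ∨ p i = 1) ∧ (∑ i, w i * p i) ≤ W ∧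
          x = (∑ i, profit i * p i) - R * travelTime n m d w l W smax smin t p}
        ((∑ i, profit i) - (R / smin) * tourDist n d t)
      ∧ (∑ i, profit i * ((fun _ : Fin m => (1 : ℝ)) i))
          - R * travelTime n m d w l W smax smin t (fun _ => 1)
          = (∑ i, profit i) - (R / smin) * tourDist n d t)
    ∧ (∀ tstar, IsCyclicTour n tstar →
        ((∀ t, IsCyclicTour n t → tourDist n d tstar ≤ tourDist n d t)
          ↔ (∀ t, IsCyclicTour n t →
              sSup {x : ℝ | ∃ p : Fin m → ℝ, (∀ i, p i = 0 ∨ p i = 1) ∧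
                  (∑ i, w i * p i) ≤ W ∧
                  x = (∑ i, profit i * p i) - R * travelTime n m d w l W smax smin t p}
              ≤ sSup {x : ℝ | ∃ p : Fin m → ℝ, (∀ i, p i = 0 ∨ p i = 1) ∧
                  (∑ i, w i * p i) ≤ W ∧
                  x = (∑ i, profit i * p i)
                    - R * travelTime n m d w l W smax smin tstar p}))) := by
  have hT : ∀ (t : ℕ → ℕ) (p : Fin m → ℝ),
      R * travelTime n m d w l W smax smin t p = (R / smin) * tourDist n d t := by
    intro t p
    have h : travelTime n m d w l W smax smin t p = tourDist n d t / smin := by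
      simp only [travelTime, travelTimeUpTo, tourDist, speed, hconst, sub_self, mul_zero,
        sub_zero, Finset.sum_div]
    rw [h]
    ring
  have hG : ∀ t : ℕ → ℕ, IsGreatest
        {x : ℝ | ∃ p : Fin m → ℝ, (∀ i, p i = 0 ∨ p i = 1) ∧ (∑ i, w i * p i) ≤ W ∧
          x = (∑ i, profit i * p i) - R * travelTime n m d w l W smax smin t p}
        ((∑ i, profit i) - (R / smin) * tourDist n d t) := by
    intro t
    constructor
    · refine ⟨fun _ => 1, fun _ => Or.inr rfl, ?_, ?_⟩
      · simpa using hcap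
      · rw [hT]
        simp
    · rintro x ⟨p, hp, -, rfl⟩
      rw [hT]
      refine sub_le_sub_right (Finset.sum_le_sum fun i _ => ?_) _
      rcases hp i with h | h <;> rw [h]
      · simpa using (hprofit i).le
      · simp
  have hpos : 0 < R / smin := div_pos hR hsmin
  refine ⟨fun t _ => ⟨hG t, ?_⟩, fun tstar _ => forall_congr' fun t => imp_congr_right fun _ => ?_⟩
  · rw [hT]
    simp
  · rw [(hG t).csSup_eq, (hG tstar).csSup_eq, sub_le_sub_iff_left, mul_le_mul_iff_right₀ hpos]
end

section
/- (2OPT for TSPC) Let t be a cyclic tour, p a collection plan, 0 < b < e < n, and t' = 2OPT(t,b,e), with the distance function symmetric. Then the per-edge travelling times outside the segment [b−1, e] coincide for t and t', and consequently T(t',p) = T(t,p) + τ_{t',p}(e+1) − τ_{t,p}(e+1). -/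
/-- Reversing a segment inside the range does not change the sum over positions. -/
theorem sum_twoOpt (t : ℕ → ℕ) (b e k : ℕ) (hk : e ≤ k) (f : ℕ → ℝ) :
    ∑ i ∈ Finset.range (k + 1), f (twoOpt t b e i) = ∑ i ∈ Finset.range (k + 1), f (t i) := by
  refine Finset.sum_nbij' (fun i => if b ≤ i ∧ i ≤ e then b + e - i else i)
    (fun i => if b ≤ i ∧ i ≤ e then b + e - i else i) ?_ ?_ ?_ ?_ ?_
  · intro i hi
    simp only [Finset.mem_range] at *
    split_ifs <;> omega
  · intro i hi
    simp only [Finset.mem_range] at *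
    split_ifs <;> omega
  · intro i hi
    split_ifs <;> omega
  · intro i hi
    split_ifs <;> omega
  · intro i hi
    unfold twoOpt
    split_ifs <;> rfl

/-- 2OPT for TSPC: with a symmetric distance function, the per-edge travelling
times outside the positions `[b−1, e]` coincide for `t` and `t' = 2OPT(t,b,e)`,
and consequently `T(t',p) = T(t,p) + τ_{t',p}(e+1) − τ_{t,p}(e+1)`. -/
theorem twoOpt_travelTime
    (n m : ℕ) (hn : 2 ≤ n)
    (d : ℕ → ℕ → ℝ) (hd : ∀ c c', c ≠ c' → 0 < d c c')
    (hsym : ∀ c c', d c c' = d c' c)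
    (w : Fin m → ℝ) (hw : ∀ i, 0 < w i)
    (l : Fin m → ℕ) (hl : ∀ i, 1 < l i)
    (W smax smin : ℝ) (hW : 0 < W) (hs : smin ≤ smax) (hsmin : 0 < smin)
    (t : ℕ → ℕ) (ht : IsCyclicTour n t)
    (p : Fin m → ℝ) (hp : ∀ i, p i = 0 ∨ p i = 1)
    (b e : ℕ) (hb : 0 < b) (hbe : b < e) (he : e < n)
    (hspeed : ∀ k, speed W smax smin (knapWeight m w l t p k) ≠ 0)
    (hspeed' : ∀ k, speed W smax smin (knapWeight m w l (twoOpt t b e) p k) ≠ 0) :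
    (∀ k, k < n → ¬(b - 1 ≤ k ∧ k ≤ e) →
        d (twoOpt t b e k) (twoOpt t b e (k + 1))
            / speed W smax smin (knapWeight m w l (twoOpt t b e) p k)
          = d (t k) (t (k + 1)) / speed W smax smin (knapWeight m w l t p k))
    ∧ travelTime n m d w l W smax smin (twoOpt t b e) p
        = travelTime n m d w l W smax smin t p
          + travelTimeUpTo m d w l W smax smin (twoOpt t b e) p (e + 1)
          - travelTimeUpTo m d w l W smax smin t p (e + 1) := by
  have key : ∀ k, ¬(b - 1 ≤ k ∧ k ≤ e) →
        d (twoOpt t b e k) (twoOpt t b e (k + 1))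
            / speed W smax smin (knapWeight m w l (twoOpt t b e) p k)
          = d (t k) (t (k + 1)) / speed W smax smin (knapWeight m w l t p k) := by
    intro k hk
    have out : ∀ j, ¬(b ≤ j ∧ j ≤ e) → twoOpt t b e j = t j := by
      intro j hj
      simp only [twoOpt, if_neg hj]
    have hkw : knapWeight m w l (twoOpt t b e) p k = knapWeight m w l t p k := by
      unfold knapWeight
      by_cases h : e ≤ k
      · exact sum_twoOpt t b e k h (cityWeight m w l p)
      · refine Finset.sum_congr rfl fun j hj => ?_
        rw [Finset.mem_range] at hj
        rw [out j (by omega)]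
    rw [hkw, out k (by omega), out (k + 1) (by omega)]
  refine ⟨fun k _ hk => key k hk, ?_⟩
  unfold travelTime travelTimeUpTo
  have hle : e + 1 ≤ n := he
  rw [← Finset.sum_range_add_sum_Ico _ hle,
    ← Finset.sum_range_add_sum_Ico
      (fun k' => d (t k') (t (k' + 1)) / speed W smax smin (knapWeight m w l t p k')) hle]
  have : ∀ k ∈ Finset.Ico (e + 1) n, _ := fun k hk =>
    key k (by rw [Finset.mem_Ico] at hk; omega)
  rw [Finset.sum_congr rfl this]
  ring
end
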